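/- Let p be an odd prime, Δ an integer not divisible by p, set ε = 1 if the image of Δ in ℤ/pℤ is a square and ε = −1 otherwise, and let k be a natural number. Consider the quadratic form in n = 2k+2 variables B(x₀, x₁, …, x_{2k+1}) = x₀² − Δ·x₁² + ∑_{i=1}^{k} x_{2i}·x_{2i+1}. For a natural number ℓ let X_ℓ = N_ℓ / p^{nℓ}, where N_ℓ is the number of v ∈ (ℤ/p^ℓℤ)^n with B(v) = 0. Then for every real z with |z| < 1, the series ∑_{ℓ≥0} z^ℓ · (X_ℓ − X_{ℓ+1}) converges with sum (1 − ε·p^{−(k+1)})(1 − p^{−1}) / ((1 − z/p)(1 − ε·z·p^{−(k+1)})). -/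

import Mathlib

lemma surj_count {G H : Type*} [AddCommGroup G] [AddCommGroup H] [Finite G] [Finite H]
    (f : G →+ H) (hf : Function.Surjective f) (P : H → Prop) :
    Nat.card {g : G // P (f g)} * Nat.card H = Nat.card G * Nat.card {h : H // P h} := by
  have hfib : ∀ h : H, Nat.card {g : G // f g = h} = Nat.card f.ker := by
    intro h
    obtain ⟨g0, rfl⟩ := hf h
    refine Nat.card_congr ⟨fun g => ⟨g.1 - g0, by simp [AddMonoidHom.mem_ker, g.2]⟩,
      fun g => ⟨g.1 + g0, by have := g.2; rw [AddMonoidHom.mem_ker] at this; simp [this]⟩, ?_, ?_⟩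
    · intro g; simp
    · intro g; simp
  have key : ∀ P : H → Prop, Nat.card {g : G // P (f g)} = Nat.card {h : H // P h} * Nat.card f.ker := by
    intro P
    have e : {g : G // P (f g)} ≃ Σ h : {h : H // P h}, {g : G // f g = h.1} :=
      ⟨fun g => ⟨⟨f g.1, g.2⟩, ⟨g.1, rfl⟩⟩, fun x => ⟨x.2.1, by rw [x.2.2]; exact x.1.2⟩,
        fun g => rfl, by rintro ⟨⟨h, hh⟩, ⟨g, hg⟩⟩; dsimp at hg; subst hg; rfl⟩
    have := Fintype.ofFinite {h : H // P h}
    rw [Nat.card_congr e, Nat.card_sigma]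
    simp [hfib]
  have h1 := key (fun _ => True)
  have h2 : Nat.card {g : G // True} = Nat.card G := Nat.card_congr (Equiv.subtypeUnivEquiv (fun _ => trivial))
  have h3 : Nat.card {g : H // True} = Nat.card H := Nat.card_congr (Equiv.subtypeUnivEquiv (fun _ => trivial))
  rw [h2, h3] at h1
  rw [key P, h1]; ring

lemma cast_dvd_iff {m d : ℕ} [NeZero m] (h : d ∣ m) (c : ZMod m) :
    (d : ZMod m) ∣ c ↔ ZMod.castHom h (ZMod d) c = 0 := by
  constructor
  · rintro ⟨e, rfl⟩; rw [map_mul, map_natCast, ZMod.natCast_self, zero_mul]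
  · intro hc
    rw [← ZMod.natCast_zmod_val c, map_natCast, ZMod.natCast_eq_zero_iff] at hc
    rw [← ZMod.natCast_zmod_val c]
    exact Nat.cast_dvd_cast hc

lemma cnt_dvd {m d : ℕ} [NeZero m] (h : d ∣ m) :
    Nat.card {y : ZMod m // (d : ZMod m) ∣ y} * d = m := by
  have : NeZero d := ⟨fun h0 => NeZero.ne m (by subst h0; simpa using h)⟩
  have := surj_count (ZMod.castHom h (ZMod d)).toAddMonoidHom (ZMod.castHom_surjective h) (fun c => c = 0)
  simp only [cast_dvd_iff h]
  simpa using this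

open Classical in
lemma cnt (m : ℕ) [NeZero m] (x c : ZMod m) :
    Nat.card {y : ZMod m // x * y = c} =
      if ((Nat.gcd m x.val : ℕ) : ZMod m) ∣ c then Nat.gcd m x.val else 0 := by
  set d := Nat.gcd m x.val with hd
  have hdm : d ∣ m := Nat.gcd_dvd_left _ _
  have hdpos : 0 < d := Nat.gcd_pos_of_pos_left _ (NeZero.pos m)
  have hdx : (d : ZMod m) ∣ x := by
    conv_rhs => rw [← ZMod.natCast_zmod_val x]
    exact Nat.cast_dvd_cast (Nat.gcd_dvd_right _ _)
  have hxd : ∃ a : ZMod m, x * a = d := by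
    refine ⟨(Nat.gcdB m x.val : ℤ), ?_⟩
    have := Nat.gcd_eq_gcd_ab m x.val
    have := congrArg (Int.cast : ℤ → ZMod m) this
    push_cast at this
    rw [ZMod.natCast_self, ZMod.natCast_zmod_val] at this
    rw [hd, this]; ring
  split_ifs with hc
  · obtain ⟨a, ha⟩ := hxd
    obtain ⟨e, rfl⟩ := hc
    obtain ⟨q, hq⟩ := hdm
    have hqm : q ∣ m := ⟨d, by rw [hq]; ring⟩
    have e1 : {y : ZMod m // x * y = d * e} ≃ {y : ZMod m // (q : ZMod m) ∣ y} := by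
      have hk : ∀ y : ZMod m, x * y = 0 ↔ (q : ZMod m) ∣ y := by
        intro y
        constructor
        · intro h
          have h2 : (d : ZMod m) * y = 0 := by rw [← ha, mul_right_comm, h, zero_mul]
          rw [← ZMod.natCast_zmod_val y] at h2 ⊢
          rw [← Nat.cast_mul, ZMod.natCast_eq_zero_iff] at h2
          apply Nat.cast_dvd_cast
          exact Nat.dvd_of_mul_dvd_mul_left hdpos (by rwa [← hq])
        · rintro ⟨f, rfl⟩
          obtain ⟨g, hg⟩ := hdx
          rw [hg]
          have : (d : ZMod m) * q = 0 := by rw [← Nat.cast_mul, ← hq, ZMod.natCast_self]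
          linear_combination (g * f) * this
      refine ⟨fun y => ⟨y.1 - a * e, (hk _).1 (by rw [mul_sub, y.2, ← ha]; ring)⟩,
        fun y => ⟨y.1 + a * e, by rw [mul_add, (hk _).2 y.2, ← ha]; ring⟩, ?_, ?_⟩
      · intro y; simp
      · intro y; simp
    rw [Nat.card_congr e1]
    have h5 := cnt_dvd hqm
    have hq0 : 0 < q := Nat.pos_of_ne_zero (by rintro rfl; exact NeZero.ne m (by simpa using hq))
    exact Nat.eq_of_mul_eq_mul_right hq0 (h5.trans hq)
  · rw [Nat.card_eq_zero]; left
    refine ⟨fun y => hc ?_⟩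
    rw [← y.2]; exact hdx.mul_right _

lemma sum_gcd (m : ℕ) [NeZero m] (F : ℕ → ℕ) :
    ∑ x : ZMod m, F (Nat.gcd m x.val) = ∑ d ∈ m.divisors, Nat.totient (m / d) * F d := by
  have h1 : ∑ x : ZMod m, F (Nat.gcd m x.val) = ∑ i ∈ Finset.range m, F (Nat.gcd m i) := by
    refine Finset.sum_nbij' (fun x => x.val) (fun i => (i : ZMod m)) ?_ ?_ ?_ ?_ ?_
    · intro x _; simpa using ZMod.val_lt x
    · simp
    · intro x _; simp
    · intro i hi; exact ZMod.val_cast_of_lt (by simpa using hi)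
    · simp
  rw [h1, ← Finset.sum_fiberwise_of_maps_to (t := m.divisors) (g := fun i => Nat.gcd m i)]
  · refine Finset.sum_congr rfl fun d hd => ?_
    rw [Nat.totient_div_of_dvd (Nat.dvd_of_mem_divisors hd), ← smul_eq_mul, ← Finset.sum_const]
    exact Finset.sum_congr rfl fun i hi => by rw [(Finset.mem_filter.1 hi).2]
  · intro i _
    simp [NeZero.ne m, Nat.gcd_dvd_left]

lemma hyp_count (m : ℕ) [NeZero m] {A : Type*} [Finite A] (a : A → ZMod m) :
    Nat.card {w : A × ZMod m × ZMod m // a w.1 + w.2.1 * w.2.2 = 0} =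
      ∑ d ∈ m.divisors, Nat.totient (m / d) * (d * Nat.card {v : A // (d : ZMod m) ∣ a v}) := by
  classical
  have := Fintype.ofFinite A
  rw [← sum_gcd m (fun d => d * Nat.card {v : A // (d : ZMod m) ∣ a v})]
  have e : {w : A × ZMod m × ZMod m // a w.1 + w.2.1 * w.2.2 = 0} ≃
      Σ x : ZMod m, Σ v : A, {y : ZMod m // x * y = - a v} :=
    ⟨fun w => ⟨w.1.2.1, w.1.1, w.1.2.2, by linear_combination w.2⟩,
     fun s => ⟨(s.2.1, s.1, s.2.2.1), by have := s.2.2.2; simp [this]⟩,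
     fun w => rfl, fun s => rfl⟩
  rw [Nat.card_congr e, Nat.card_sigma]
  refine Finset.sum_congr rfl fun x _ => ?_
  rw [Nat.card_sigma]
  simp only [cnt, dvd_neg]
  rw [← Finset.sum_filter, Finset.sum_const, smul_eq_mul, mul_comm, Nat.card_eq_fintype_card,
    Fintype.card_subtype]

lemma hyp_count_pow (p : ℕ) (hp : p.Prime) (l : ℕ) {A : Type*} [Finite A]
    (a : A → ZMod (p ^ l)) (X : ℕ → ℝ)
    (hX : ∀ j ≤ l, (Nat.card {v : A // ((p ^ j : ℕ) : ZMod (p ^ l)) ∣ a v} : ℝ) = Nat.card A * X j) :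
    (Nat.card {w : A × ZMod (p ^ l) × ZMod (p ^ l) // a w.1 + w.2.1 * w.2.2 = 0} : ℝ) =
      Nat.card A * p ^ l * (X l + (1 - (p : ℝ)⁻¹) * ∑ j ∈ Finset.range l, X j) := by
  have : NeZero (p ^ l) := ⟨pow_ne_zero _ hp.ne_zero⟩
  have hp0 : (p : ℝ) ≠ 0 := by exact_mod_cast hp.ne_zero
  rw [hyp_count, Nat.sum_divisors_prime_pow hp, Finset.sum_range_succ]
  push_cast
  rw [mul_add, Finset.mul_sum, Finset.mul_sum, add_comm]
  congr 1
  · rw [Nat.div_self (NeZero.pos _), Nat.totient_one]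
    have := hX l le_rfl
    push_cast at this
    rw [this]; push_cast; ring
  · refine Finset.sum_congr rfl fun j hj => ?_
    have hj : j < l := by simpa using hj
    have := hX j hj.le
    push_cast at this
    rw [this, Nat.pow_div hj.le hp.pos]
    obtain ⟨t, rfl⟩ : ∃ t, l = j + t + 1 := ⟨l - j - 1, by omega⟩
    rw [show j + t + 1 - j = t + 1 by omega, Nat.totient_prime_pow_succ hp]
    push_cast [hp.one_le]
    field_simp
    ring

lemma idx0 (k : ℕ) : 0 < 2 * k + 2 := by omega
lemma idx1 (k : ℕ) : 1 < 2 * k + 2 := by omega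
lemma idx2 (k : ℕ) (i : Fin k) : 2 * i.1 + 2 < 2 * k + 2 := by have := i.isLt; omega
lemma idx3 (k : ℕ) (i : Fin k) : 2 * i.1 + 3 < 2 * k + 2 := by have := i.isLt; omega

/-- The quadratic form of the statement. -/
def Qf {R : Type*} [CommRing R] (Δ : ℤ) (k : ℕ) (v : Fin (2 * k + 2) → R) : R :=
  v ⟨0, idx0 k⟩ ^ 2 - (Δ : R) * v ⟨1, idx1 k⟩ ^ 2 +
            ∑ i : Fin k, v ⟨2 * i + 2, idx2 k i⟩ * v ⟨2 * i + 3, idx3 k i⟩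

/-- The normalized number of zeros. -/
noncomputable def XX (p : ℕ) (Δ : ℤ) (k l : ℕ) : ℝ :=
  (Nat.card {v : Fin (2 * k + 2) → ZMod (p ^ l) // Qf Δ k v = 0} : ℝ) / p ^ ((2 * k + 2) * l)

lemma Qf_map {R S : Type*} [CommRing R] [CommRing S] (f : R →+* S) (Δ : ℤ) (k : ℕ)
    (v : Fin (2 * k + 2) → R) : f (Qf Δ k v) = Qf Δ k (fun i => f (v i)) := by
  simp [Qf, map_sum]

lemma density (p : ℕ) (hp : p.Prime) (Δ : ℤ) (k l j : ℕ) (hj : j ≤ l) :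
    (Nat.card {v : Fin (2 * k + 2) → ZMod (p ^ l) // ((p ^ j : ℕ) : ZMod (p ^ l)) ∣ Qf Δ k v} : ℝ)
      = Nat.card (Fin (2 * k + 2) → ZMod (p ^ l)) * XX p Δ k j := by
  have : NeZero (p ^ l) := ⟨pow_ne_zero _ hp.ne_zero⟩
  have : NeZero (p ^ j) := ⟨pow_ne_zero _ hp.ne_zero⟩
  have hp0 : (p : ℝ) ≠ 0 := by exact_mod_cast hp.ne_zero
  have hd : p ^ j ∣ p ^ l := pow_dvd_pow _ hj
  have h := surj_count
    ((ZMod.castHom hd (ZMod (p ^ j))).toAddMonoidHom.compLeft (Fin (2 * k + 2)))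
    (fun w => ⟨fun i => (ZMod.castHom_surjective hd (w i)).choose,
      funext fun i => (ZMod.castHom_surjective hd (w i)).choose_spec⟩)
    (fun w => Qf Δ k w = 0)
  have h2 : ∀ v : Fin (2 * k + 2) → ZMod (p ^ l), ((p ^ j : ℕ) : ZMod (p ^ l)) ∣ Qf Δ k v ↔
      Qf Δ k (((ZMod.castHom hd (ZMod (p ^ j))).toAddMonoidHom.compLeft (Fin (2 * k + 2))) v) = 0 := by
    intro v
    rw [cast_dvd_iff hd, Qf_map]
    rfl
  rw [Nat.card_congr (Equiv.subtypeEquivRight h2), XX, mul_div_assoc', eq_div_iff (by positivity)]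
  have h3 : Nat.card (Fin (2 * k + 2) → ZMod (p ^ j)) = p ^ ((2 * k + 2) * j) := by
    rw [Nat.card_fun]; simp [← pow_mul, mul_comm]
  rw [h3] at h
  exact_mod_cast h

/-- Splitting off the last two coordinates. -/
def splitE (R : Type*) (k : ℕ) :
    (Fin (2 * (k + 1) + 2) → R) ≃ (Fin (2 * k + 2) → R) × R × R where
  toFun v := (fun i => v ⟨i, by omega⟩, v ⟨2 * k + 2, by omega⟩, v ⟨2 * k + 3, by omega⟩)
  invFun w i := if h : i.1 < 2 * k + 2 then w.1 ⟨i, h⟩ else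
    if i.1 = 2 * k + 2 then w.2.1 else w.2.2
  left_inv v := by
    funext i
    by_cases h : i.1 < 2 * k + 2
    · simp [h]
    · by_cases h2 : i.1 = 2 * k + 2
      · simp only [h2]; simp; congr 1; ext; simp [h2]
      · have : i.1 = 2 * k + 3 := by omega
        simp only [this]; simp; congr 1; ext; simp [this]
  right_inv w := by
    ext i <;> simp

lemma Qf_split {R : Type*} [CommRing R] (Δ : ℤ) (k : ℕ) (v : Fin (2 * (k + 1) + 2) → R) :
    Qf Δ (k + 1) v = Qf Δ k (splitE R k v).1 + (splitE R k v).2.1 * (splitE R k v).2.2 := by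
  simp [Qf, splitE, Fin.sum_univ_castSucc, add_assoc]

lemma XX_step (p : ℕ) (hp : p.Prime) (Δ : ℤ) (k l : ℕ) :
    XX p Δ (k + 1) l * p ^ l =
      XX p Δ k l + (1 - (p : ℝ)⁻¹) * ∑ j ∈ Finset.range l, XX p Δ k j := by
  have : NeZero (p ^ l) := ⟨pow_ne_zero _ hp.ne_zero⟩
  have hp0 : (p : ℝ) ≠ 0 := by exact_mod_cast hp.ne_zero
  have h := hyp_count_pow p hp l (Qf Δ k) (XX p Δ k) (fun j hj => density p hp Δ k l j hj)
  have e : {v : Fin (2 * (k + 1) + 2) → ZMod (p ^ l) // Qf Δ (k + 1) v = 0} ≃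
      {w : (Fin (2 * k + 2) → ZMod (p ^ l)) × ZMod (p ^ l) × ZMod (p ^ l) //
        Qf Δ k w.1 + w.2.1 * w.2.2 = 0} :=
    (splitE _ k).subtypeEquiv (fun v => by rw [Qf_split])
  rw [XX, Nat.card_congr e, h]
  have h3 : Nat.card (Fin (2 * k + 2) → ZMod (p ^ l)) = p ^ ((2 * k + 2) * l) := by
    rw [Nat.card_fun]; simp [← pow_mul, mul_comm]
  rw [h3]
  push_cast
  rw [show (2 * (k + 1) + 2) * l = (2 * k + 2) * l + l + l by ring, pow_add, pow_add]
  field_simp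

/-- First order recursion. -/
def Good (u s : ℝ) (X : ℕ → ℝ) : Prop :=
  X 0 = 1 ∧ ∀ l, X (l + 1) = u * X l + s ^ (l + 1) * (1 - u)

lemma Good_step (p : ℕ) (hp : p.Prime) (s : ℝ) (X Y : ℕ → ℝ) (hX : Good (p : ℝ)⁻¹ s X)
    (h : ∀ l, Y l * p ^ l = X l + (1 - (p : ℝ)⁻¹) * ∑ j ∈ Finset.range l, X j) :
    Good (p : ℝ)⁻¹ ((p : ℝ)⁻¹ * s) Y := by
  have hp0 : (p : ℝ) ≠ 0 := by exact_mod_cast hp.ne_zero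
  refine ⟨by simpa [hX.1] using h 0, fun l => ?_⟩
  have h1 := h (l + 1)
  have h2 := h l
  rw [Finset.sum_range_succ, hX.2] at h1
  have h3 : Y (l + 1) * p ^ (l + 1) = Y l * p ^ l + s ^ (l + 1) * (1 - (p : ℝ)⁻¹) := by
    linear_combination h1 - h2
  have h4 : (p : ℝ) ^ (l + 1) ≠ 0 := pow_ne_zero _ hp0
  rw [← mul_left_inj' h4, h3, mul_pow, inv_pow]
  field_simp
  ring

lemma lift_sq (p : ℕ) (hp : p.Prime) (hp2 : p ≠ 2) (Δ : ℤ) (hΔ : ¬ (p : ℤ) ∣ Δ)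
    (h : IsSquare (Δ : ZMod p)) (l : ℕ) : ∃ δ : ℤ, (p : ℤ) ^ (l + 1) ∣ δ ^ 2 - Δ := by
  have : Fact p.Prime := ⟨hp⟩
  induction l with
  | zero =>
    obtain ⟨r, hr⟩ := h
    refine ⟨r.val, ?_⟩
    rw [zero_add, pow_one, ← ZMod.intCast_zmod_eq_zero_iff_dvd]
    push_cast
    rw [ZMod.natCast_zmod_val, hr]; ring
  | succ l ih =>
    obtain ⟨δ, hδ⟩ := ih
    have hpi : Prime (p : ℤ) := Nat.prime_iff_prime_int.1 hp
    have hpd : (p : ℤ) ∣ δ ^ 2 - Δ := (dvd_pow_self _ (Nat.succ_ne_zero l)).trans hδ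
    have hn : ¬ (p : ℤ) ∣ 2 * δ := by
      intro h
      rcases hpi.dvd_or_dvd h with h | h
      · have h6 : p ∣ 2 := by exact_mod_cast h
        exact hp2 ((Nat.prime_dvd_prime_iff_eq hp Nat.prime_two).1 h6)
      · apply hΔ
        have : (p : ℤ) ∣ δ ^ 2 := dvd_pow h two_ne_zero
        simpa using dvd_sub this hpd
    obtain ⟨a, b, hab⟩ := (hpi.coprime_iff_not_dvd.2 hn)
    obtain ⟨c, hc⟩ := hδ
    refine ⟨δ - (δ ^ 2 - Δ) * b, ?_⟩
    have h1 : (δ - (δ ^ 2 - Δ) * b) ^ 2 - Δ =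
      (δ ^ 2 - Δ) * (a * p) + (δ ^ 2 - Δ) * (δ ^ 2 - Δ) * b ^ 2 := by
        linear_combination (-(δ ^ 2 - Δ)) * hab
    rw [h1]
    apply dvd_add
    · rw [hc]; exact ⟨c * a, by ring⟩
    · rw [hc]; exact ⟨c * c * b ^ 2 * p ^ l, by ring⟩

/-- Two coordinates. -/
def pairE (R : Type*) : (Fin (2 * 0 + 2) → R) ≃ R × R := finTwoArrowEquiv R

lemma base_split (p : ℕ) (hp : p.Prime) (hp2 : p ≠ 2) (Δ : ℤ) (hΔ : ¬ (p : ℤ) ∣ Δ)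
    (h : IsSquare (Δ : ZMod p)) : Good (p : ℝ)⁻¹ ((p : ℝ)⁻¹ * 1) (XX p Δ 0) := by
  refine Good_step p hp 1 (fun _ => 1) _ ⟨rfl, fun l => by simp⟩ fun l => ?_
  have hp0 : (p : ℝ) ≠ 0 := by exact_mod_cast hp.ne_zero
  have : NeZero (p ^ l) := ⟨pow_ne_zero _ hp.ne_zero⟩
  have hc := hyp_count_pow p hp l (A := Unit) (fun _ => 0) (fun _ => 1) (fun j hj => by simp)
  obtain ⟨δ, hδ⟩ := lift_sq p hp hp2 Δ hΔ h l
  have hs : (Δ : ZMod (p ^ l)) = (δ : ZMod (p ^ l)) ^ 2 := by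
    have : ((δ ^ 2 - Δ : ℤ) : ZMod (p ^ l)) = 0 := by
      rw [ZMod.intCast_zmod_eq_zero_iff_dvd]
      push_cast
      exact (pow_dvd_pow _ (Nat.le_succ l)).trans hδ
    push_cast at this
    linear_combination -this
  have hu : ∃ b : ZMod (p ^ l), b * (2 * δ) = 1 := by
    have hpi : Prime (p : ℤ) := Nat.prime_iff_prime_int.1 hp
    have hpd : (p : ℤ) ∣ δ ^ 2 - Δ := (dvd_pow_self _ (Nat.succ_ne_zero l)).trans hδ
    have hn : ¬ (p : ℤ) ∣ 2 * δ := by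
      intro h
      rcases hpi.dvd_or_dvd h with h | h
      · have h6 : p ∣ 2 := by exact_mod_cast h
        exact hp2 ((Nat.prime_dvd_prime_iff_eq hp Nat.prime_two).1 h6)
      · apply hΔ
        have : (p : ℤ) ∣ δ ^ 2 := dvd_pow h two_ne_zero
        simpa using dvd_sub this hpd
    obtain ⟨a, b, hab⟩ := ((hpi.coprime_iff_not_dvd.2 hn).pow_left (m := l))
    refine ⟨b, ?_⟩
    have := congrArg (Int.cast : ℤ → ZMod (p ^ l)) hab
    push_cast at this
    have h0 : (p : ZMod (p ^ l)) ^ l = 0 := by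
      have := ZMod.natCast_self (p ^ l); push_cast at this; exact this
    rw [h0] at this
    linear_combination this
  obtain ⟨b, hb⟩ := hu
  have e : {v : Fin (2 * 0 + 2) → ZMod (p ^ l) // Qf Δ 0 v = 0} ≃
      {w : Unit × ZMod (p ^ l) × ZMod (p ^ l) // (fun _ => 0) w.1 + w.2.1 * w.2.2 = 0} := by
    refine Equiv.subtypeEquiv ((pairE _).trans
      ⟨fun w => ((), w.1 - δ * w.2, w.1 + δ * w.2),
       fun t => (δ * b * (t.2.1 + t.2.2), b * (t.2.2 - t.2.1)), ?_, ?_⟩) ?_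
    · rintro ⟨x, y⟩
      ext
      · linear_combination x * hb
      · linear_combination y * hb
    · rintro ⟨_, x, y⟩
      ext
      · linear_combination x * hb
      · linear_combination y * hb
    · intro v
      simp [Qf, pairE, finTwoArrowEquiv, hs]
      rw [show v 0 ^ 2 - (δ : ZMod (p ^ l)) ^ 2 * v 1 ^ 2
        = (v 0 - δ * v 1) * (v 0 + δ * v 1) by ring]
  rw [XX, Nat.card_congr e, hc]
  simp only [Nat.card_unique, Nat.cast_one, one_mul]
  rw [show (2 * 0 + 2) * l = l + l by ring, pow_add]
  field_simp

lemma aniso (p : ℕ) (hp : p.Prime) (Δ : ℤ) (hns : ¬ IsSquare (Δ : ZMod p)) (x y : ℤ)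
    (h : (p : ℤ) ∣ x ^ 2 - Δ * y ^ 2) : (p : ℤ) ∣ x ∧ (p : ℤ) ∣ y := by
  have : Fact p.Prime := ⟨hp⟩
  have hpi : Prime (p : ℤ) := Nat.prime_iff_prime_int.1 hp
  have h1 := (ZMod.intCast_zmod_eq_zero_iff_dvd _ _).2 h
  push_cast at h1
  have hy : (y : ZMod p) = 0 := by
    by_contra hy
    apply hns
    refine ⟨x / y, ?_⟩
    field_simp
    linear_combination -h1
  rw [hy] at h1
  have hx : (x : ZMod p) = 0 := by simpa using h1
  exact ⟨(ZMod.intCast_zmod_eq_zero_iff_dvd _ _).1 hx, (ZMod.intCast_zmod_eq_zero_iff_dvd _ _).1 hy⟩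

lemma aniso_pow (p : ℕ) (hp : p.Prime) (Δ : ℤ) (hns : ¬ IsSquare (Δ : ZMod p)) (l : ℕ) :
    ∀ x y : ℤ, (p : ℤ) ^ l ∣ x ^ 2 - Δ * y ^ 2 ↔
      (p : ℤ) ^ ((l + 1) / 2) ∣ x ∧ (p : ℤ) ^ ((l + 1) / 2) ∣ y := by
  have hp0 : (p : ℤ) ≠ 0 := by exact_mod_cast hp.ne_zero
  induction l using Nat.twoStepInduction with
  | zero => simp
  | one =>
    intro x y
    simp only [pow_one, Nat.reduceAdd, Nat.reduceDiv]
    exact ⟨aniso p hp Δ hns x y, fun ⟨h1, h2⟩ =>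
      dvd_sub (dvd_pow h1 two_ne_zero) ((dvd_pow h2 two_ne_zero).mul_left _)⟩
  | more l ih _ =>
    intro x y
    rw [show (l + 2 + 1) / 2 = (l + 1) / 2 + 1 by omega]
    have key : ∀ a b : ℤ, (p : ℤ) ^ (l + 2) ∣ (p * a) ^ 2 - Δ * (p * b) ^ 2 ↔
        (p : ℤ) ^ ((l + 1) / 2 + 1) ∣ p * a ∧ (p : ℤ) ^ ((l + 1) / 2 + 1) ∣ p * b := by
      intro a b
      rw [pow_succ' (p : ℤ) ((l + 1) / 2), mul_dvd_mul_iff_left hp0, mul_dvd_mul_iff_left hp0, ← ih a b,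
        show (p * a : ℤ) ^ 2 - Δ * (p * b) ^ 2 = p ^ 2 * (a ^ 2 - Δ * b ^ 2) by ring,
        show (p : ℤ) ^ (l + 2) = p ^ 2 * p ^ l by ring, mul_dvd_mul_iff_left (pow_ne_zero _ hp0)]
    constructor
    · intro h
      obtain ⟨⟨a, rfl⟩, ⟨b, rfl⟩⟩ := aniso p hp Δ hns x y ((dvd_pow_self _ (by omega)).trans h)
      exact (key a b).1 h
    · intro h
      obtain ⟨a, rfl⟩ := (dvd_pow_self (p : ℤ) (Nat.succ_ne_zero _)).trans h.1
      obtain ⟨b, rfl⟩ := (dvd_pow_self (p : ℤ) (Nat.succ_ne_zero _)).trans h.2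
      exact (key a b).2 h

lemma XX_inert (p : ℕ) (hp : p.Prime) (Δ : ℤ) (hns : ¬ IsSquare (Δ : ZMod p)) (l : ℕ) :
    XX p Δ 0 l = ((p : ℝ)⁻¹) ^ (2 * ((l + 1) / 2)) := by
  have hp0 : (p : ℝ) ≠ 0 := by exact_mod_cast hp.ne_zero
  have : NeZero (p ^ l) := ⟨pow_ne_zero _ hp.ne_zero⟩
  set c := (l + 1) / 2 with hc
  have hd : p ^ c ∣ p ^ l := pow_dvd_pow _ (by omega)
  have hdv : ∀ x : ZMod (p ^ l), ((p ^ c : ℕ) : ZMod (p ^ l)) ∣ x ↔ (p : ℤ) ^ c ∣ (x.val : ℤ) := by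
    intro x
    rw [cast_dvd_iff hd]
    conv_lhs => rw [← ZMod.natCast_zmod_val x, map_natCast, ZMod.natCast_eq_zero_iff]
    rw [← Int.natCast_dvd_natCast]; push_cast; rfl
  have e : {v : Fin (2 * 0 + 2) → ZMod (p ^ l) // Qf Δ 0 v = 0} ≃
      {x : ZMod (p ^ l) // ((p ^ c : ℕ) : ZMod (p ^ l)) ∣ x} ×
      {x : ZMod (p ^ l) // ((p ^ c : ℕ) : ZMod (p ^ l)) ∣ x} := by
    refine (Equiv.subtypeEquiv (pairE _) ?_).trans (Equiv.subtypeProdEquivProd)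
    intro v
    have h1 := aniso_pow p hp Δ hns l (v 0).val (v 1).val
    rw [← hc, ← hdv, ← hdv] at h1
    simp only [pairE, finTwoArrowEquiv]
    refine Iff.trans ?_ h1
    have h2 := ZMod.intCast_zmod_eq_zero_iff_dvd (((v 0).val : ℤ) ^ 2 - Δ * ((v 1).val : ℤ) ^ 2) (p ^ l)
    push_cast at h2
    rw [← h2, ZMod.natCast_zmod_val, ZMod.natCast_zmod_val]
    simp [Qf]
  rw [XX, Nat.card_congr e, Nat.card_prod]
  have h3 : (Nat.card {x : ZMod (p ^ l) // ((p ^ c : ℕ) : ZMod (p ^ l)) ∣ x} : ℝ) * p ^ c = p ^ l := by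
    exact_mod_cast cnt_dvd hd
  rw [div_eq_iff (by positivity), inv_pow, Nat.cast_mul, pow_mul' (p : ℝ) 2 c,
    show (2 * 0 + 2) * l = l * 2 by ring, pow_mul (p : ℝ) l 2, ← h3]
  field_simp

lemma base_inert (p : ℕ) (hp : p.Prime) (Δ : ℤ) (hns : ¬ IsSquare (Δ : ZMod p)) :
    Good (p : ℝ)⁻¹ ((p : ℝ)⁻¹ * (-1)) (XX p Δ 0) := by
  refine ⟨by simp [XX_inert p hp Δ hns], fun l => ?_⟩
  rw [XX_inert p hp Δ hns, XX_inert p hp Δ hns, mul_neg, mul_one]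
  generalize (p : ℝ)⁻¹ = u
  obtain ⟨t, rfl | rfl⟩ := l.even_or_odd'
  · rw [show (2 * t + 1 + 1) / 2 = t + 1 by omega, show (2 * t + 1) / 2 = t by omega,
      Odd.neg_pow ⟨t, rfl⟩]; ring
  · rw [show (2 * t + 1 + 1 + 1) / 2 = t + 1 by omega, show (2 * t + 1 + 1) / 2 = t + 1 by omega,
      Even.neg_pow ⟨t + 1, by ring⟩]; ring

lemma good_all (p : ℕ) (hp : p.Prime) (Δ : ℤ) (ε : ℝ)
    (h0 : Good (p : ℝ)⁻¹ ((p : ℝ)⁻¹ * ε) (XX p Δ 0)) (k : ℕ) :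
    Good (p : ℝ)⁻¹ (ε * ((p : ℝ)⁻¹) ^ (k + 1)) (XX p Δ k) := by
  induction k with
  | zero => convert h0 using 1; ring
  | succ k ih =>
    have := Good_step p hp _ _ _ ih (XX_step p hp Δ k)
    convert this using 1; ring

lemma hasSum_of_eq {f g : ℕ → ℝ} {a b : ℝ} (h : HasSum f a) (hfg : ∀ l, g l = f l)
    (hab : b = a) : HasSum g b := by
  rw [hab, show g = f from funext hfg]; exact h

lemma good_sum (u s z : ℝ) (X : ℕ → ℝ) (hX : Good u s X) (hb : ∀ l, |X l| ≤ 1)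
    (hz : |z| < 1) (hu : |u| ≤ 1) (hs : |s| ≤ 1) :
    HasSum (fun l => z ^ l * (X l - X (l + 1))) ((1 - s) * (1 - u) / ((1 - z * u) * (1 - z * s))) := by
  have hlt : ∀ t : ℝ, |t| ≤ 1 → |z * t| < 1 := fun t ht => by
    rw [abs_mul]; nlinarith [abs_nonneg z, abs_nonneg t]
  have hsum : Summable (fun l => z ^ l * X l) := by
    refine Summable.of_norm_bounded (summable_geometric_of_lt_one (abs_nonneg z) hz) fun l => ?_
    rw [Real.norm_eq_abs, abs_mul, abs_pow]
    exact mul_le_of_le_one_right (by positivity) (hb l)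
  obtain ⟨F, hF⟩ := hsum
  have hg := (hasSum_geometric_of_abs_lt_one (hlt s hs)).mul_left (s * (1 - u))
  have hG : HasSum (fun l => z ^ l * X (l + 1)) (u * F + s * (1 - u) * (1 - z * s)⁻¹) := by
    refine hasSum_of_eq ((hF.mul_left u).add hg) (fun l => ?_) rfl
    rw [hX.2]; ring
  have hF2 : HasSum (fun l => z ^ l * X l) (z * (u * F + s * (1 - u) * (1 - z * s)⁻¹) + 1) := by
    rw [← hasSum_nat_add_iff' 1]
    refine hasSum_of_eq (hG.mul_left z) (fun l => ?_) ?_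
    · ring
    · simp [hX.1]
  have hEq := hF.unique hF2
  have n1 : 1 - z * u ≠ 0 := by have := abs_lt.1 (hlt u hu); linarith
  have n2 : 1 - z * s ≠ 0 := by have := abs_lt.1 (hlt s hs); linarith
  have hD := hF.sub hG
  refine hasSum_of_eq hD (fun l => ?_) ?_
  · ring
  · have hi : (1 - z * s) * (1 - z * s)⁻¹ = 1 := mul_inv_cancel₀ n2
    rw [div_eq_iff (mul_ne_zero n1 n2)]
    linear_combination (-(1 - u) * (1 - z * s)) * hEq + (s * (1 - u) * (1 - z)) * hi

open Classical in
theorem stmt_19 (p : ℕ) (hp : p.Prime) (hp2 : p ≠ 2) (Δ : ℤ) (hΔ : ¬ (p : ℤ) ∣ Δ)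
    (ε : ℝ) (hε : ε = if IsSquare (Δ : ZMod p) then 1 else -1) (k : ℕ)
    (X : ℕ → ℝ)
    (hX : ∀ ℓ : ℕ, X ℓ =
      (Nat.card {v : Fin (2 * k + 2) → ZMod (p ^ ℓ) //
          v ⟨0, by omega⟩ ^ 2 - (Δ : ZMod (p ^ ℓ)) * v ⟨1, by omega⟩ ^ 2 +
            ∑ i : Fin k, v ⟨2 * i + 2, by have := i.isLt; omega⟩ *
              v ⟨2 * i + 3, by have := i.isLt; omega⟩
            = 0} : ℝ) / p ^ ((2 * k + 2) * ℓ))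
    (z : ℝ) (hz : |z| < 1) :
    HasSum (fun ℓ : ℕ => z ^ ℓ * (X ℓ - X (ℓ + 1)))
      ((1 - ε * (p : ℝ) ^ (-(k + 1 : ℤ))) * (1 - (p : ℝ)⁻¹)
        / ((1 - z / p) * (1 - ε * z * (p : ℝ) ^ (-(k + 1 : ℤ))))) := by
  have hXX : X = XX p Δ k := funext hX
  have hp1 : (1 : ℝ) ≤ p := by exact_mod_cast hp.one_le
  have hu0 : (0 : ℝ) ≤ (p : ℝ)⁻¹ := by positivity
  have hu1 : (p : ℝ)⁻¹ ≤ 1 := inv_le_one_of_one_le₀ hp1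
  have h0 : Good (p : ℝ)⁻¹ ((p : ℝ)⁻¹ * ε) (XX p Δ 0) := by
    rw [hε]
    split_ifs with h
    · exact base_split p hp hp2 Δ hΔ h
    · exact base_inert p hp Δ h
  have hεa : |ε| = 1 := by rw [hε]; split_ifs <;> simp
  have hb : ∀ l, |XX p Δ k l| ≤ 1 := by
    intro l
    have : NeZero (p ^ l) := ⟨pow_ne_zero _ hp.ne_zero⟩
    rw [abs_of_nonneg (by unfold XX; positivity), XX]
    apply div_le_one_of_le₀ _ (by positivity)
    have h3 : Nat.card (Fin (2 * k + 2) → ZMod (p ^ l)) = p ^ ((2 * k + 2) * l) := by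
      rw [Nat.card_fun]; simp [← pow_mul, mul_comm]
    have := Nat.card_le_card_of_injective
      (Subtype.val : {v : Fin (2 * k + 2) → ZMod (p ^ l) // Qf Δ k v = 0} → _)
      Subtype.val_injective
    rw [h3] at this
    exact_mod_cast this
  have hs : |ε * ((p : ℝ)⁻¹) ^ (k + 1)| ≤ 1 := by
    rw [abs_mul, hεa, one_mul, abs_of_nonneg (by positivity)]
    exact pow_le_one₀ hu0 hu1
  have hz1 : (p : ℝ) ^ (-(k + 1 : ℤ)) = ((p : ℝ)⁻¹) ^ (k + 1) := by
    rw [zpow_neg, inv_pow]; norm_cast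
  have := good_sum _ _ z _ (good_all p hp Δ ε h0 k) hb hz (by rwa [abs_of_nonneg hu0]) hs
  rw [hXX, hz1]
  convert this using 2
  rw [div_eq_mul_inv z]
  ring
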